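/- arXiv:2411.04070 — 2 statements merged into one kernel-verified Lean document; each statement's English description precedes it below -/
import Mathlib

section
/- Let P and Q be finite graded bounded posets and let P*Q = P ⊕ (Q ∖ {0̂_Q}) denote their join. Then the left χ-augmented Chow polynomials satisfy G_{P*Q}(x) = G_P(x) · G_Q(x). -/
/-!
In the join `P * Q` the top of `P` takes over the role of the bottom of `Q`, so it is an element `c`
comparable to everything, with `[⊥, c] ≅ P` and `[c, ⊤] ≅ Q`. For `s < c < t` the Möbius function
`μ_{st}` vanishes, hence `χ_{st} = χ_{sc} x^{ρ_{ct}}` and likewise for `χ̄`. The augmented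
function `G = ζ^rev H` satisfies `G χ̄ = -ζ^rev`, that is,
`G_{st} = x^{ρ_{st}} + ∑_{s ≤ w < t} G_{sw} χ̄_{wt}`. In this recursion the terms with `w < c`,
together with `x^{ρ_{st}}`, add up to `G_{sc} x^{ρ_{ct}}`, so by induction on `t` the remaining ones
give `G_{st} = G_{sc} G_{ct}`.
-/

open Finset Polynomial
open scoped Classical

noncomputable section

variable {α : Type*}

/-- Convolution product in the incidence algebra of a locally finite poset over `ℤ[x]`.
Only the values on intervals `s ≤ t` are relevant. -/
def conv [PartialOrder α] [LocallyFiniteOrder α] (a b : α → α → Polynomial ℤ) :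
    α → α → Polynomial ℤ :=
  fun s t => ∑ w ∈ Finset.Icc s t, a s w * b w t

/-- The identity `δ` of the incidence algebra. -/
def dlt [PartialOrder α] : α → α → Polynomial ℤ :=
  fun s t => if s = t then 1 else 0

/-- The involution `a ↦ a^rev`, given by `(a^rev)_{st}(x) = x^{ρ_{st}} a_{st}(1/x)`. -/
def rev (ρ : α → α → ℕ) (a : α → α → Polynomial ℤ) : α → α → Polynomial ℤ :=
  fun s t => (a s t).reflect (ρ s t)

/-- A weak rank function on a poset. -/
structure IsWeakRank [Preorder α] (ρ : α → α → ℕ) : Prop where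
  pos : ∀ ⦃s t : α⦄, s < t → 0 < ρ s t
  add : ∀ ⦃s w t : α⦄, s ≤ w → w ≤ t → ρ s t = ρ s w + ρ w t

/-- `κ` is a `(P,ρ)`-kernel: it lies in `I_ρ(P)`, is `1` on the diagonal, and `κ⁻¹ = κ^rev`. -/
structure IsKernel [PartialOrder α] [LocallyFiniteOrder α] (ρ : α → α → ℕ)
    (κ : α → α → Polynomial ℤ) : Prop where
  degLE : ∀ ⦃s t : α⦄, s ≤ t → (κ s t).natDegree ≤ ρ s t
  diag : ∀ s : α, κ s s = 1
  left : ∀ ⦃s t : α⦄, s ≤ t → conv (rev ρ κ) κ s t = dlt s t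
  right : ∀ ⦃s t : α⦄, s ≤ t → conv κ (rev ρ κ) s t = dlt s t

/-- The reduced kernel `κ̄`: `κ̄_{st} = κ_{st}/(x-1)` for `s < t` and `κ̄_{ss} = -1`. -/
def red [PartialOrder α] (κ : α → α → Polynomial ℤ) : α → α → Polynomial ℤ :=
  fun s t => if s = t then -1 else κ s t /ₘ (X - 1)

/-- `H` is the Chow function of `κ`, i.e. `H = -(κ̄)⁻¹`. -/
structure IsChow [PartialOrder α] [LocallyFiniteOrder α] (κ H : α → α → Polynomial ℤ) : Prop where
  left : ∀ ⦃s t : α⦄, s ≤ t → conv (red κ) H s t = -dlt s t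
  right : ∀ ⦃s t : α⦄, s ≤ t → conv H (red κ) s t = -dlt s t

/-- `f` is the right KLS function of the kernel `κ`. -/
structure IsRightKLS [PartialOrder α] [LocallyFiniteOrder α] (ρ : α → α → ℕ)
    (κ f : α → α → Polynomial ℤ) : Prop where
  diag : ∀ s : α, f s s = 1
  degLT : ∀ ⦃s t : α⦄, s < t → 2 * (f s t).natDegree < ρ s t
  rev_eq : ∀ ⦃s t : α⦄, s ≤ t → rev ρ f s t = conv κ f s t

/-- `g` is the left KLS function of the kernel `κ`. -/
structure IsLeftKLS [PartialOrder α] [LocallyFiniteOrder α] (ρ : α → α → ℕ)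
    (κ g : α → α → Polynomial ℤ) : Prop where
  diag : ∀ s : α, g s s = 1
  degLT : ∀ ⦃s t : α⦄, s < t → 2 * (g s t).natDegree < ρ s t
  rev_eq : ∀ ⦃s t : α⦄, s ≤ t → rev ρ g s t = conv g κ s t

/-- `p` is symmetric with center of symmetry `d/2`, i.e. `p(x) = x^d p(1/x)`. -/
def PolySymm (d : ℕ) (p : Polynomial ℤ) : Prop := p.natDegree ≤ d ∧ p.reflect d = p

/-- All coefficients of `p` are non-negative. -/
def PolyNonneg (p : Polynomial ℤ) : Prop := ∀ n, 0 ≤ p.coeff n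

/-- The coefficient sequence of `p` is unimodal. -/
def PolyUnimodal (p : Polynomial ℤ) : Prop :=
  ∃ j, (∀ i < j, p.coeff i ≤ p.coeff (i + 1)) ∧ ∀ i, j ≤ i → p.coeff (i + 1) ≤ p.coeff i

end

noncomputable section

variable {α : Type*}

/-- `mu` is the Möbius function of the poset: `mu = ζ⁻¹`. -/
def IsMobius [PartialOrder α] [LocallyFiniteOrder α] (mu : α → α → ℤ) : Prop :=
  (∀ s : α, mu s s = 1) ∧
  (∀ ⦃s t : α⦄, s < t → ∑ w ∈ Finset.Icc s t, mu s w = 0) ∧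
  (∀ ⦃s t : α⦄, s < t → ∑ w ∈ Finset.Icc s t, mu w t = 0)

/-- The characteristic function `χ = μ·ζ^rev`, i.e. `χ_{st}(x) = Σ_{s≤w≤t} μ_{sw} x^{ρ_{wt}}`. -/
def chi [PartialOrder α] [LocallyFiniteOrder α] (ρ : α → α → ℕ) (mu : α → α → ℤ) :
    α → α → Polynomial ℤ :=
  fun s t => ∑ w ∈ Finset.Icc s t, Polynomial.C (mu s w) * X ^ ρ w t

/-- Convolution `ζ^rev · a`, where `ζ^rev_{sw} = x^{ρ_{sw}}`.  Applied to the Chow function `H`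
of the kernel `χ` (whose left KLS function is `g = ζ`) it gives the left augmented Chow function
`G = g^rev · H`; applied to the right KLS function `f` it gives the `Z`-function `Z = g^rev·f`. -/
def zrevConv [PartialOrder α] [LocallyFiniteOrder α] (ρ : α → α → ℕ)
    (a : α → α → Polynomial ℤ) : α → α → Polynomial ℤ :=
  fun s t => ∑ w ∈ Finset.Icc s t, X ^ ρ s w * a w t

/-- `rk` witnesses that the finite bounded poset is graded: covering relations increase `rk`
by exactly one, `rk` is strictly monotone (automatic in the finite graded case), and `rk ⊥ = 0`. -/
structure GradedData [PartialOrder α] [BoundedOrder α] (rk : α → ℕ) : Prop where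
  cov : ∀ ⦃a b : α⦄, a ⋖ b → rk b = rk a + 1
  mono : StrictMono rk
  bot : rk (⊥ : α) = 0

/-- The weak rank function `ρ_{st} = rk t - rk s` induced by a rank function `rk`. -/
def rdiff (rk : α → ℕ) : α → α → ℕ := fun a b => rk b - rk a

end

section Convolution

variable {α : Type*} [PartialOrder α] [LocallyFiniteOrder α]

lemma Ico_strong_induction {s : α} {p : α → Prop}
    (ih : ∀ t, s ≤ t → (∀ w ∈ Ico s t, p w) → p t) {t : α} (hst : s ≤ t) : p t := by
  induction hn : #(Ico s t) using Nat.strong_induction_on generalizing t with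
  | h n card_ih =>
    refine ih t hst fun w hw => card_ih _ ?_ (mem_Ico.mp hw).1 rfl
    obtain ⟨-, hwt⟩ := mem_Ico.mp hw
    rw [← hn]
    exact card_lt_card ⟨Ico_subset_Ico_right hwt.le, fun h => right_notMem_Ico (h hw)⟩

lemma conv_assoc (a b c : α → α → ℤ[X]) (s t : α) :
    conv (conv a b) c s t = conv a (conv b c) s t := by
  simp only [conv, sum_mul, mul_sum, mul_assoc]
  refine sum_comm' fun w v => ?_
  simp only [mem_Icc]
  exact ⟨fun ⟨⟨_, hwt⟩, hsv, hvw⟩ => ⟨⟨hvw, hwt⟩, hsv, hvw.trans hwt⟩,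
    fun ⟨⟨hvw, hwt⟩, hsv, _⟩ => ⟨⟨hsv.trans hvw, hwt⟩, hsv, hvw⟩⟩

lemma IsMobius.eq_neg_sum_Ico {mu : α → α → ℤ} (hmu : IsMobius mu) {s t : α} (hst : s < t) :
    mu s t = -∑ w ∈ Ico s t, mu s w := by
  rw [eq_neg_iff_add_eq_zero, add_comm, sum_Ico_add_eq_sum_Icc hst.le, hmu.2.1 hst]

lemma X_sub_one_mul_red_chi (ρ : α → α → ℕ) {mu : α → α → ℤ} (hmu : IsMobius mu) {s t : α}
    (hst : s < t) : (X - 1) * red (chi ρ mu) s t = chi ρ mu s t := by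
  have hroot : (chi ρ mu s t).IsRoot 1 := by
    simpa [IsRoot, chi, eval_finsetSum] using hmu.2.1 hst
  simpa [red, hst.ne] using mul_divByMonic_eq_iff_isRoot.mpr hroot

lemma conv_zrevConv_red (ρ : α → α → ℕ) {κ H : α → α → ℤ[X]} (hH : IsChow κ H) {s t : α}
    (hst : s ≤ t) : conv (zrevConv ρ H) (red κ) s t = -X ^ ρ s t :=
  calc
    conv (zrevConv ρ H) (red κ) s t = conv (fun u v => X ^ ρ u v) (conv H (red κ)) s t :=
      conv_assoc ..
    _ = ∑ w ∈ Icc s t, X ^ ρ s w * -dlt w t :=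
      sum_congr rfl fun w hw => by rw [hH.right (mem_Icc.mp hw).2]
    _ = -X ^ ρ s t := by simp [dlt, hst]

lemma zrevConv_eq_add_sum_Ico (ρ : α → α → ℕ) {κ H : α → α → ℤ[X]} (hH : IsChow κ H) {s t : α}
    (hst : s ≤ t) :
    zrevConv ρ H s t = X ^ ρ s t + ∑ w ∈ Ico s t, zrevConv ρ H s w * red κ w t := by
  have h := conv_zrevConv_red ρ hH hst
  have hdiag : red κ t t = -1 := if_pos rfl
  rw [conv, ← sum_Ico_add_eq_sum_Icc hst, hdiag] at h
  linear_combination -h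

end Convolution

/-- `c` is a cut element of the interval `[s, t]`: it lies in `[s, t]` and is comparable to all of
its elements. This is the position of the top of `P` in the join `P * Q`. -/
structure IsCutElement {α : Type*} [Preorder α] (s c t : α) : Prop where
  left_le : s ≤ c
  le_right : c ≤ t
  le_or_le : ∀ ⦃w⦄, s ≤ w → w ≤ t → w ≤ c ∨ c ≤ w

namespace IsCutElement

lemma mono {α : Type*} [Preorder α] {s s' c t t' : α} (hc : IsCutElement s c t) (hs : s ≤ s')
    (hsc : s' ≤ c) (hct : c ≤ t') (ht : t' ≤ t) : IsCutElement s' c t' :=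
  ⟨hsc, hct, fun _ hsw hwt => hc.le_or_le (hs.trans hsw) (hwt.trans ht)⟩

variable {α : Type*} [PartialOrder α] [LocallyFiniteOrder α] {s c t : α}

lemma sum_Ico {M : Type*} [AddCommMonoid M] (hc : IsCutElement s c t) (F : α → M) :
    ∑ w ∈ Ico s t, F w = ∑ w ∈ Ico s c, F w + ∑ w ∈ Ico c t, F w := by
  have hdisj : Disjoint (Ico s c) (Ico c t) :=
    disjoint_left.mpr fun w hw hw' => (mem_Ico.mp hw).2.not_ge (mem_Ico.mp hw').1
  rw [← sum_union hdisj]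
  congr 1
  ext w
  simp only [mem_union, mem_Ico]
  constructor
  · rintro ⟨hsw, hwt⟩
    rcases hc.le_or_le hsw hwt.le with hwc | hcw
    · exact hwc.lt_or_eq.imp (⟨hsw, ·⟩) fun h => ⟨h.ge, hwt⟩
    · exact Or.inr ⟨hcw, hwt⟩
  · rintro (⟨hsw, hwc⟩ | ⟨hcw, hwt⟩)
    · exact ⟨hsw, hwc.trans_le hc.le_right⟩
    · exact ⟨hc.left_le.trans hcw, hwt⟩

lemma mobius_eq_zero {mu : α → α → ℤ} (hmu : IsMobius mu) (hc : IsCutElement s c t)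
    (hsc : s < c) (hct : c < t) : mu s t = 0 := by
  refine Ico_strong_induction (s := c) (p := fun v => c < v → v ≤ t → mu s v = 0)
    (fun v hcv ih hlt hvt => ?_) hct.le hct le_rfl
  have hcut : IsCutElement s c v := hc.mono le_rfl hsc.le hcv hvt
  have hlower : ∑ w ∈ Ico s c, mu s w + mu s c = 0 := by
    rw [sum_Ico_add_eq_sum_Icc hsc.le, hmu.2.1 hsc]
  have hupper : ∑ w ∈ Ico c v, mu s w = mu s c := by
    refine sum_eq_single_of_mem c (left_mem_Ico.mpr hlt) fun w hw hne => ?_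
    have hcw := mem_Ico.mp hw
    exact ih w hw (hcw.1.lt_of_ne' hne) (hcw.2.le.trans hvt)
  rw [hmu.eq_neg_sum_Ico (hsc.trans hlt), hcut.sum_Ico, hupper, hlower, neg_zero]

variable {ρ : α → α → ℕ} (hρ : IsWeakRank ρ) {mu : α → α → ℤ} (hmu : IsMobius mu)
include hρ hmu

lemma chi_eq_mul (hc : IsCutElement s c t) (hsc : s < c) :
    chi ρ mu s t = chi ρ mu s c * X ^ ρ c t := by
  have hsub : Icc s c ⊆ Icc s t := Icc_subset_Icc_right hc.le_right
  rw [chi, chi, ← sum_subset hsub fun w hw hwc => ?_, sum_mul]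
  · refine sum_congr rfl fun w hw => ?_
    rw [hρ.add (mem_Icc.mp hw).2 hc.le_right, pow_add, mul_assoc]
  · obtain ⟨hsw, hwt⟩ := mem_Icc.mp hw
    have hnot : ¬w ≤ c := fun h => hwc (mem_Icc.mpr ⟨hsw, h⟩)
    have hcw : c ≤ w := (hc.le_or_le hsw hwt).resolve_left hnot
    have hcut : IsCutElement s c w := hc.mono le_rfl hsc.le hcw hwt
    rw [hcut.mobius_eq_zero hmu hsc (hcw.lt_of_not_ge hnot), map_zero, zero_mul]

lemma red_chi_eq_mul (hc : IsCutElement s c t) (hsc : s < c) :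
    red (chi ρ mu) s t = red (chi ρ mu) s c * X ^ ρ c t := by
  have hne : (X - 1 : ℤ[X]) ≠ 0 := by simpa using X_sub_C_ne_zero (1 : ℤ)
  refine mul_left_cancel₀ hne ?_
  rw [← mul_assoc, X_sub_one_mul_red_chi ρ hmu (hsc.trans_le hc.le_right),
    X_sub_one_mul_red_chi ρ hmu hsc, chi_eq_mul hρ hmu hc hsc]

theorem zrevConv_eq_mul {H : α → α → ℤ[X]} (hH : IsChow (chi ρ mu) H)
    (hc : IsCutElement s c t) :
    zrevConv ρ H s t = zrevConv ρ H s c * zrevConv ρ H c t := by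
  refine Ico_strong_induction (s := c)
    (p := fun v => v ≤ t → zrevConv ρ H s v = zrevConv ρ H s c * zrevConv ρ H c v)
    (fun v hcv ih hvt => ?_) hc.le_right le_rfl
  have hcut : IsCutElement s c v := hc.mono le_rfl hc.left_le hcv hvt
  have hlower : ∑ w ∈ Ico s c, zrevConv ρ H s w * red (chi ρ mu) w v
      = (∑ w ∈ Ico s c, zrevConv ρ H s w * red (chi ρ mu) w c) * X ^ ρ c v := by
    rw [sum_mul]
    refine sum_congr rfl fun w hw => ?_
    obtain ⟨hsw, hwc⟩ := mem_Ico.mp hw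
    rw [red_chi_eq_mul hρ hmu (hcut.mono hsw hwc.le hcv le_rfl) hwc, mul_assoc]
  have hupper : ∑ w ∈ Ico c v, zrevConv ρ H s w * red (chi ρ mu) w v
      = zrevConv ρ H s c * ∑ w ∈ Ico c v, zrevConv ρ H c w * red (chi ρ mu) w v := by
    rw [mul_sum]
    refine sum_congr rfl fun w hw => ?_
    rw [ih w hw ((mem_Ico.mp hw).2.le.trans hvt), mul_assoc]
  calc
    zrevConv ρ H s v
        = X ^ ρ s c * X ^ ρ c v
          + ((∑ w ∈ Ico s c, zrevConv ρ H s w * red (chi ρ mu) w c) * X ^ ρ c v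
            + zrevConv ρ H s c * ∑ w ∈ Ico c v, zrevConv ρ H c w * red (chi ρ mu) w v) := by
      rw [zrevConv_eq_add_sum_Ico ρ hH (hc.left_le.trans hcv), hcut.sum_Ico, hlower, hupper,
        hρ.add hc.left_le hcv, pow_add]
    _ = zrevConv ρ H s c
          * (X ^ ρ c v + ∑ w ∈ Ico c v, zrevConv ρ H c w * red (chi ρ mu) w v) := by
      linear_combination -X ^ ρ c v * zrevConv_eq_add_sum_Ico ρ hH hc.left_le
    _ = zrevConv ρ H s c * zrevConv ρ H c v := by rw [← zrevConv_eq_add_sum_Ico ρ hH hcv]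

end IsCutElement

section Embedding

variable {α β : Type*} [PartialOrder α] [PartialOrder β] {f : α ↪o β}
  (hf : (Set.range f).OrdConnected)
include hf

lemma GradedData.rdiff_map [BoundedOrder α] [LocallyFiniteOrder α] [BoundedOrder β]
    {rk : α → ℕ} {rk' : β → ℕ} (hg : GradedData rk) (hg' : GradedData rk') ⦃s t : α⦄
    (hst : s ≤ t) : rdiff rk' (f s) (f t) = rdiff rk s t := by
  have hshift : rk' (f t) + rk s = rk' (f s) + rk t := by
    induction le_iff_reflTransGen_covBy.mp hst with
    | refl => rfl
    | tail hsw hwt ih =>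
      have := ih (le_iff_reflTransGen_covBy.mpr hsw)
      have := hg.cov hwt
      have := hg'.cov (hwt.image f hf)
      omega
  simp only [rdiff]
  omega

variable [LocallyFiniteOrder α] [LocallyFiniteOrder β]

lemma sum_Icc_map {M : Type*} [AddCommMonoid M] (F : β → M) (s t : α) :
    ∑ w ∈ Icc (f s) (f t), F w = ∑ w ∈ Icc s t, F (f w) := by
  have himage : Icc (f s) (f t) = (Icc s t).map f.toEmbedding :=
    coe_injective (by simp [f.image_Icc hf])
  rw [himage, sum_map]
  rfl

lemma sum_Ico_map {M : Type*} [AddCommMonoid M] (F : β → M) (s t : α) :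
    ∑ w ∈ Ico (f s) (f t), F w = ∑ w ∈ Ico s t, F (f w) := by
  have himage : Ico (f s) (f t) = (Ico s t).map f.toEmbedding :=
    coe_injective (by simp [f.image_Ico hf])
  rw [himage, sum_map]
  rfl

variable {mu : α → α → ℤ} {mu' : β → β → ℤ} (hmu : IsMobius mu) (hmu' : IsMobius mu')
include hmu hmu'

lemma IsMobius.apply_map {s t : α} (hst : s ≤ t) : mu' (f s) (f t) = mu s t := by
  refine Ico_strong_induction (p := fun v => mu' (f s) (f v) = mu s v) (fun v hsv ih => ?_) hst
  rcases hsv.eq_or_lt with rfl | hlt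
  · rw [hmu.1, hmu'.1]
  · rw [hmu.eq_neg_sum_Ico hlt, hmu'.eq_neg_sum_Ico (f.strictMono hlt), sum_Ico_map hf,
      sum_congr rfl ih]

variable {ρ : α → α → ℕ} {ρ' : β → β → ℕ} (hρ : ∀ ⦃s t⦄, s ≤ t → ρ' (f s) (f t) = ρ s t)
include hρ

lemma chi_map (s t : α) : chi ρ' mu' (f s) (f t) = chi ρ mu s t := by
  rw [chi, chi, sum_Icc_map hf]
  refine sum_congr rfl fun w hw => ?_
  obtain ⟨hsw, hwt⟩ := mem_Icc.mp hw
  rw [hmu.apply_map hf hmu' hsw, hρ hwt]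

lemma red_chi_map (s t : α) : red (chi ρ' mu') (f s) (f t) = red (chi ρ mu) s t := by
  simp only [red, f.eq_iff_eq, chi_map hf hmu hmu' hρ]

lemma zrevConv_map {H : α → α → ℤ[X]} {H' : β → β → ℤ[X]} (hH : IsChow (chi ρ mu) H)
    (hH' : IsChow (chi ρ' mu') H') {s t : α} (hst : s ≤ t) :
    zrevConv ρ' H' (f s) (f t) = zrevConv ρ H s t := by
  refine Ico_strong_induction (p := fun v => zrevConv ρ' H' (f s) (f v) = zrevConv ρ H s v)
    (fun v hsv ih => ?_) hst
  rw [zrevConv_eq_add_sum_Ico ρ hH hsv, zrevConv_eq_add_sum_Ico ρ' hH' (f.monotone hsv),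
    sum_Ico_map hf, hρ hsv]
  congr 1
  exact sum_congr rfl fun w hw => by rw [ih w hw, red_chi_map hf hmu hmu' hρ]

end Embedding

lemma GradedData.isWeakRank_rdiff {α : Type*} [PartialOrder α] [BoundedOrder α] {rk : α → ℕ}
    (hg : GradedData rk) : IsWeakRank (rdiff rk) where
  pos _ _ hst := Nat.sub_pos_of_lt (hg.mono hst)
  add s w t hsw hwt := by
    have := hg.mono.monotone hsw
    have := hg.mono.monotone hwt
    simp only [rdiff]
    omega

section Join

variable {P Q R : Type*} [PartialOrder P] [PartialOrder Q] [OrderBot Q] [PartialOrder R]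

/-- The inclusion of `P` into the join `R ≅ P * Q`. -/
def joinLeft (e : R ≃o (P ⊕ₗ {q : Q // (⊥ : Q) < q})) : P ↪o R :=
  OrderEmbedding.ofMapLEIff (fun p => e.symm (Sum.inlₗ p)) fun p p' => by simp

variable [OrderTop P]

/-- The inclusion of `Q` into the join `R ≅ P * Q`. The bottom of `Q`, which is removed in the join,
is sent to the top of `P`, so that the image is again an interval. -/
noncomputable def joinRight (e : R ≃o (P ⊕ₗ {q : Q // (⊥ : Q) < q})) : Q ↪o R :=
  OrderEmbedding.ofMapLEIff
    (fun q => if hq : ⊥ < q then e.symm (Sum.inrₗ ⟨q, hq⟩) else e.symm (Sum.inlₗ ⊤))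
    fun q q' => by
      rcases (bot_le (a := q)).eq_or_lt with rfl | hq <;>
        rcases (bot_le (a := q')).eq_or_lt with rfl | hq' <;> simp [*, LT.lt.ne']

variable (e : R ≃o (P ⊕ₗ {q : Q // (⊥ : Q) < q}))

lemma joinRight_bot : joinRight e ⊥ = joinLeft e ⊤ := by
  simp [joinLeft, joinRight]

lemma joinRight_coe (q : {q : Q // (⊥ : Q) < q}) : joinRight e q = e.symm (Sum.inrₗ q) := by
  simp [joinRight, q.2]

lemma mem_range_joinLeft_or_mem_range_joinRight (r : R) :
    r ∈ Set.range (joinLeft e) ∨ r ∈ Set.range (joinRight e) := by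
  obtain ⟨p | q, rfl⟩ := e.symm.surjective r
  · exact Or.inl ⟨p, rfl⟩
  · exact Or.inr ⟨q, joinRight_coe e q⟩

lemma joinLeft_le_joinRight (p : P) (q : Q) : joinLeft e p ≤ joinRight e q :=
  calc
    joinLeft e p ≤ joinLeft e ⊤ := (joinLeft e).monotone le_top
    _ = joinRight e ⊥ := (joinRight_bot e).symm
    _ ≤ joinRight e q := (joinRight e).monotone bot_le

lemma range_joinLeft : Set.range (joinLeft e) = Set.Iic (joinLeft e ⊤) := by
  refine Set.Subset.antisymm ?_ fun r hr => ?_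
  · rintro _ ⟨p, rfl⟩
    exact (joinLeft e).monotone le_top
  · rcases mem_range_joinLeft_or_mem_range_joinRight e r with hmem | ⟨q, rfl⟩
    · exact hmem
    · rw [Set.mem_Iic, ← joinRight_bot, (joinRight e).le_iff_le, le_bot_iff] at hr
      exact ⟨⊤, by rw [hr, joinRight_bot]⟩

lemma range_joinRight : Set.range (joinRight e) = Set.Ici (joinLeft e ⊤) := by
  refine Set.Subset.antisymm ?_ fun r hr => ?_
  · rintro _ ⟨q, rfl⟩
    exact joinLeft_le_joinRight e ⊤ q
  · rcases mem_range_joinLeft_or_mem_range_joinRight e r with ⟨p, rfl⟩ | hmem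
    · rw [Set.mem_Ici, (joinLeft e).le_iff_le, top_le_iff] at hr
      exact ⟨⊥, by rw [hr, joinRight_bot]⟩
    · exact hmem

lemma ordConnected_range_joinLeft : (Set.range (joinLeft e)).OrdConnected :=
  range_joinLeft e ▸ Set.ordConnected_Iic

lemma ordConnected_range_joinRight : (Set.range (joinRight e)).OrdConnected :=
  range_joinRight e ▸ Set.ordConnected_Ici

lemma isCutElement_joinLeft_top (p : P) (q : Q) :
    IsCutElement (joinLeft e p) (joinLeft e ⊤) (joinRight e q) where
  left_le := (joinLeft e).monotone le_top
  le_right := joinLeft_le_joinRight e ⊤ q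
  le_or_le r _ _ := by
    simpa only [range_joinLeft, range_joinRight, Set.mem_Iic, Set.mem_Ici]
      using mem_range_joinLeft_or_mem_range_joinRight e r

lemma joinLeft_bot [OrderBot P] [OrderBot R] : joinLeft e ⊥ = ⊥ := by
  have hmem : ⊥ ∈ Set.range (joinLeft e) := range_joinLeft e ▸ bot_le
  obtain ⟨p, hp⟩ := hmem
  exact le_bot_iff.mp (hp ▸ (joinLeft e).monotone bot_le)

lemma joinRight_top [OrderTop Q] [OrderTop R] : joinRight e ⊤ = ⊤ := by
  have hmem : ⊤ ∈ Set.range (joinRight e) := range_joinRight e ▸ le_top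
  obtain ⟨q, hq⟩ := hmem
  exact top_le_iff.mp (hq ▸ (joinRight e).monotone le_top)

end Join

theorem aug_chow_of_join_general {P Q R : Type*}
    [PartialOrder P] [OrderTop P] [LocallyFiniteOrder P]
    [PartialOrder Q] [OrderBot Q] [LocallyFiniteOrder Q]
    [PartialOrder R] [LocallyFiniteOrder R]
    {ρP : P → P → ℕ} {muP : P → P → ℤ} (hmuP : IsMobius muP)
    {HP : P → P → ℤ[X]} (hHP : IsChow (chi ρP muP) HP)
    {ρQ : Q → Q → ℕ} {muQ : Q → Q → ℤ} (hmuQ : IsMobius muQ)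
    {HQ : Q → Q → ℤ[X]} (hHQ : IsChow (chi ρQ muQ) HQ)
    {ρR : R → R → ℕ} (hρR : IsWeakRank ρR) {muR : R → R → ℤ} (hmuR : IsMobius muR)
    {HR : R → R → ℤ[X]} (hHR : IsChow (chi ρR muR) HR)
    (e : R ≃o (P ⊕ₗ {q : Q // (⊥ : Q) < q}))
    (hρP : ∀ ⦃p p'⦄, p ≤ p' → ρR (joinLeft e p) (joinLeft e p') = ρP p p')
    (hρQ : ∀ ⦃q q'⦄, q ≤ q' → ρR (joinRight e q) (joinRight e q') = ρQ q q') (p : P) (q : Q) :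
    zrevConv ρR HR (joinLeft e p) (joinRight e q)
      = zrevConv ρP HP p ⊤ * zrevConv ρQ HQ ⊥ q :=
  calc
    zrevConv ρR HR (joinLeft e p) (joinRight e q)
        = zrevConv ρR HR (joinLeft e p) (joinLeft e ⊤)
          * zrevConv ρR HR (joinRight e ⊥) (joinRight e q) := by
      rw [(isCutElement_joinLeft_top e p q).zrevConv_eq_mul hρR hmuR hHR, joinRight_bot]
    _ = zrevConv ρP HP p ⊤ * zrevConv ρQ HQ ⊥ q := by
      rw [zrevConv_map (ordConnected_range_joinLeft e) hmuP hmuR hρP hHP hHR le_top,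
        zrevConv_map (ordConnected_range_joinRight e) hmuQ hmuR hρQ hHQ hHR bot_le]

/-- Corollary 4.8: if `R ≅ P * Q = P ⊕ (Q ∖ {0̂_Q})` is the join of two finite graded bounded
posets, then the left `χ`-augmented Chow polynomials satisfy `G_{P*Q}(x) = G_P(x) · G_Q(x)`. -/
theorem aug_chow_of_join {P Q R : Type*}
    [PartialOrder P] [BoundedOrder P] [Fintype P] [LocallyFiniteOrder P]
    [PartialOrder Q] [BoundedOrder Q] [Fintype Q] [LocallyFiniteOrder Q]
    [PartialOrder R] [BoundedOrder R] [Fintype R] [LocallyFiniteOrder R]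
    (rkP : P → ℕ) (hgP : GradedData rkP) (muP : P → P → ℤ) (hmuP : IsMobius muP)
    (HP : P → P → Polynomial ℤ) (hHP : IsChow (chi (rdiff rkP) muP) HP)
    (rkQ : Q → ℕ) (hgQ : GradedData rkQ) (muQ : Q → Q → ℤ) (hmuQ : IsMobius muQ)
    (HQ : Q → Q → Polynomial ℤ) (hHQ : IsChow (chi (rdiff rkQ) muQ) HQ)
    (rkR : R → ℕ) (hgR : GradedData rkR) (muR : R → R → ℤ) (hmuR : IsMobius muR)
    (HR : R → R → Polynomial ℤ) (hHR : IsChow (chi (rdiff rkR) muR) HR)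
    (e : R ≃o (P ⊕ₗ {q : Q // (⊥ : Q) < q})) :
    zrevConv (rdiff rkR) HR ⊥ ⊤ = zrevConv (rdiff rkP) HP ⊥ ⊤ * zrevConv (rdiff rkQ) HQ ⊥ ⊤ := by
  have hρP := hgP.rdiff_map (ordConnected_range_joinLeft e) hgR
  have hρQ := hgQ.rdiff_map (ordConnected_range_joinRight e) hgR
  simpa only [joinLeft_bot, joinRight_top] using
    aug_chow_of_join_general hmuP hHP hmuQ hHQ hgR.isWeakRank_rdiff hmuR hHR e hρP hρQ ⊥ ⊤
end

section
/- Let P be a finite graded bounded poset. Then the χ-Chow polynomial satisfies ℋ_P(x) = 1 + x·Σ_{t ∈ P, ρ(t) > 1} ℋ_{trunc([0̂,t])}(x), and the left χ-augmented Chow polynomial satisfies G_P(x) = 1 + x·Σ_{t ∈ P, t ≠ 0̂} G_{trunc([0̂,t])}(x), where trunc(Q) denotes the truncation of a graded bounded poset Q (the subposet obtained by removing the coatoms of Q). -/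
/-!
Write `χ̄` for the reduced kernel and `[n] = 1 + x + ⋯ + x^(n-1)`.  Since `ζ·χ = ζ^rev`, one has
`(x - 1)·ζ·χ̄ = ζ^rev - x·ζ`, i.e. `(ζ·χ̄)_{st} = [ρ_{st}] - 1`.  For `A` in the incidence algebra
put `K = A·ℋ·μ`.  Then `K·ζ = A·ℋ`, while `ℋ·χ̄ = -1` gives `K·(ζ·χ̄) = -A`, that is,
`K_{st} = A_{st} + Σ_{s≤v<t} K_{sv}([ρ_{vt}] - 1)` and
`(A·ℋ)_{st} = A_{st} + Σ_{s≤v<t} K_{sv}[ρ_{vt}]`.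

On the truncation of `[0̂,t]` the first recursion produces the same values `K_{0̂v}` for `v < t`,
and multiplication by `x` turns the coefficient `[ρ_{vt} - 1]` of the second recursion there into
`[ρ_{vt}] - 1`, which vanishes at the removed coatoms.  Hence `x·(A'·ℋ')_{0̂t} = K_{0̂t}` as soon
as `A'` agrees with `A` below `t` and `x·A'_{0̂t} = A_{0̂t}`, and `(A·ℋ)_{0̂s} = Σ_{t≤s} K_{0̂t}`
becomes the desired recursion: `A = δ` yields the Chow polynomial, `A = ζ^rev` the augmented one.
-/

open Finset Polynomial
open scoped Classical

noncomputable section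

variable {α : Type*}

/-- A subtype of a finite partial order is a locally finite order. -/
noncomputable instance {β : Type*} [PartialOrder β] [Fintype β] {p : β → Prop} :
    LocallyFiniteOrder {x : β // p x} := by
  classical
  exact Fintype.toLocallyFiniteOrder

/-- The truncation `trunc([0̂,t])` of the interval `[0̂,t]`: all elements `w ≤ t` except the
coatoms of the interval (the elements of rank `rk t - 1`). -/
abbrev Tr [Preorder α] (rk : α → ℕ) (t : α) : Type _ :=
  {w : α // w ≤ t ∧ rk w ≠ rk t - 1}

/-- The rank function of the truncation: ranks are preserved, except that the top element `t`
gets rank `rk t - 1`. -/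
def trk [Preorder α] (rk : α → ℕ) (t : α) : Tr rk t → ℕ :=
  fun w => if (w : α) = t then rk t - 1 else rk (w : α)

end

noncomputable section

open IncidenceAlgebra

/-- The `x`-analogue `[n] = 1 + x + ⋯ + x^(n-1)` of the natural number `n`. -/
def qInt (n : ℕ) : ℤ[X] := ∑ i ∈ range n, X ^ i

@[simp] lemma qInt_zero : qInt 0 = 0 := by simp [qInt]

@[simp] lemma qInt_one : qInt 1 = 1 := by simp [qInt]

lemma qInt_succ (n : ℕ) : qInt (n + 1) = X * qInt n + 1 := geom_sum_succ

lemma X_sub_one_mul_qInt (n : ℕ) : (X - 1) * qInt n = X ^ n - 1 := mul_geom_sum X n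

section IncidenceAlgebra

variable {β : Type*} [PartialOrder β]

/-- A function of two variables as an element of Mathlib's incidence algebra over `ℤ[x]`; its
values outside the relation `s ≤ t` are discarded. -/
def toIncidence (f : β → β → ℤ[X]) : IncidenceAlgebra ℤ[X] β :=
  ⟨fun s t => if s ≤ t then f s t else 0, fun _ _ h => if_neg h⟩

lemma toIncidence_of_le (f : β → β → ℤ[X]) {s t : β} (h : s ≤ t) : toIncidence f s t = f s t :=
  if_pos h

lemma X_sub_one_mul_red (κ : β → β → ℤ[X]) {s t : β} (hdiag : κ s s = 1)
    (hroot : s ≠ t → (κ s t).IsRoot 1) :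
    (X - 1) * red κ s t = κ s t - if s = t then X else 0 := by
  rcases eq_or_ne s t with rfl | h
  · simp [red, hdiag]
  · simpa [red, h] using mul_divByMonic_eq_iff_isRoot.mpr (hroot h)

variable [LocallyFiniteOrder β] {ρ : β → β → ℕ} {μ : β → β → ℤ}

lemma toIncidence_conv (f g : β → β → ℤ[X]) :
    toIncidence (conv f g) = toIncidence f * toIncidence g := by
  ext s t hst : 1
  rw [toIncidence_of_le _ hst, IncidenceAlgebra.mul_apply]
  refine sum_congr rfl fun w hw => ?_
  rw [toIncidence_of_le f (mem_Icc.mp hw).1, toIncidence_of_le g (mem_Icc.mp hw).2]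

lemma toIncidence_zrevConv (H : β → β → ℤ[X]) :
    toIncidence (zrevConv ρ H) = toIncidence (fun s t => X ^ ρ s t) * toIncidence H :=
  toIncidence_conv _ _

lemma IsChow.toIncidence_mul_red {κ H : β → β → ℤ[X]} (hH : IsChow κ H) :
    toIncidence H * toIncidence (red κ) = -1 := by
  rw [← toIncidence_conv]
  ext s t hst : 1
  rw [toIncidence_of_le _ hst, hH.right hst, IncidenceAlgebra.neg_apply,
    IncidenceAlgebra.one_apply, dlt]

lemma IsMobius.zeta_mul (hμ : IsMobius μ) :
    zeta ℤ[X] * toIncidence (fun s t => C (μ s t)) = 1 := by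
  ext s t hst : 1
  have hsum : ∑ w ∈ Icc s t, μ w t = if s = t then 1 else 0 := by
    rcases hst.eq_or_lt with rfl | hlt
    · simp [hμ.1]
    · rw [hμ.2.2 hlt, if_neg hlt.ne]
  calc (zeta ℤ[X] * toIncidence fun s t => C (μ s t) : IncidenceAlgebra ℤ[X] β) s t
    _ = ∑ w ∈ Icc s t, C (μ w t) := sum_congr rfl fun w hw => by
        rw [zeta_of_le (mem_Icc.mp hw).1, toIncidence_of_le _ (mem_Icc.mp hw).2, one_mul]
    _ = (1 : IncidenceAlgebra ℤ[X] β) s t := by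
        rw [← map_sum, hsum, IncidenceAlgebra.one_apply, apply_ite C, C_1, C_0]

lemma IsMobius.zeta_mul_chi (hμ : IsMobius μ) :
    zeta ℤ[X] * toIncidence (chi ρ μ) = toIncidence fun s t => X ^ ρ s t := by
  have hχ : toIncidence (chi ρ μ) =
      toIncidence (fun s t => C (μ s t)) * toIncidence fun s t => X ^ ρ s t :=
    toIncidence_conv _ _
  rw [hχ, ← mul_assoc, hμ.zeta_mul, one_mul]

lemma IsMobius.isRoot_chi (hμ : IsMobius μ) {s t : β} (hst : s < t) :
    (chi ρ μ s t).IsRoot 1 := by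
  simpa [chi, eval_finsetSum] using hμ.2.1 hst

lemma IsMobius.X_sub_one_smul_red_chi (hμ : IsMobius μ) (hρ : ∀ s, ρ s s = 0) :
    (X - 1 : ℤ[X]) • toIncidence (red (chi ρ μ)) =
      toIncidence (chi ρ μ) - (X : ℤ[X]) • 1 := by
  ext s t hst : 1
  rw [IncidenceAlgebra.constSMul_apply, IncidenceAlgebra.sub_apply,
    IncidenceAlgebra.constSMul_apply, IncidenceAlgebra.one_apply, toIncidence_of_le _ hst,
    toIncidence_of_le _ hst, smul_eq_mul, smul_eq_mul, mul_ite, mul_one, mul_zero]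
  exact X_sub_one_mul_red _ (by simp [chi, hμ.1, hρ]) fun hne => hμ.isRoot_chi (hst.lt_of_ne hne)

lemma IsMobius.zeta_mul_red_chi (hμ : IsMobius μ) (hρ : ∀ s, ρ s s = 0) :
    zeta ℤ[X] * toIncidence (red (chi ρ μ)) = toIncidence fun s t => qInt (ρ s t) - 1 := by
  have hmul : (X - 1 : ℤ[X]) • (zeta ℤ[X] * toIncidence (red (chi ρ μ))) =
      toIncidence (fun s t => X ^ ρ s t) - (X : ℤ[X]) • zeta ℤ[X] := by
    rw [← mul_smul_comm, hμ.X_sub_one_smul_red_chi hρ, mul_sub, hμ.zeta_mul_chi, mul_smul_comm,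
      mul_one]
  ext s t hst : 1
  have hentry := congr($hmul s t)
  rw [IncidenceAlgebra.constSMul_apply, IncidenceAlgebra.sub_apply,
    IncidenceAlgebra.constSMul_apply, toIncidence_of_le _ hst, zeta_of_le hst, smul_eq_mul,
    smul_eq_mul, mul_one] at hentry
  refine mul_left_cancel₀ (X_sub_C_ne_zero (1 : ℤ)) ?_
  rw [C_1, hentry, toIncidence_of_le _ hst, mul_sub, X_sub_one_mul_qInt]
  ring

/-- The Möbius inverse `K = A·ℋ·μ` of the row sums `A·ℋ = K·ζ`.  For `A = δ` and `A = ζ^rev` the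
entries `K_{0̂t}` are the summands of Larson's recursions. -/
def chowIncrement (A : IncidenceAlgebra ℤ[X] β) (H : β → β → ℤ[X]) : IncidenceAlgebra ℤ[X] β :=
  A * toIncidence H * mu ℤ[X]

variable {H : β → β → ℤ[X]} (A : IncidenceAlgebra ℤ[X] β)

lemma sum_chowIncrement (s t : β) :
    ∑ v ∈ Icc s t, chowIncrement A H s v = (A * toIncidence H) s t := by
  have hzeta : chowIncrement A H * zeta ℤ[X] = A * toIncidence H := by
    rw [chowIncrement, mul_assoc, mu_mul_zeta, mul_one]
  rw [← hzeta, mul_apply]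
  exact sum_congr rfl fun v hv => by rw [zeta_of_le (mem_Icc.mp hv).2, mul_one]

lemma chowIncrement_mul_qInt_sub_one (hμ : IsMobius μ) (hρ : ∀ s, ρ s s = 0)
    (hH : IsChow (chi ρ μ) H) :
    chowIncrement A H * toIncidence (fun s t => qInt (ρ s t) - 1) = -A :=
  calc A * toIncidence H * mu ℤ[X] * toIncidence (fun s t => qInt (ρ s t) - 1)
    _ = A * toIncidence H * (mu ℤ[X] * zeta ℤ[X]) * toIncidence (red (chi ρ μ)) := by
        rw [← hμ.zeta_mul_red_chi hρ]; simp only [mul_assoc]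
    _ = -A := by
        rw [mu_mul_zeta, mul_one, mul_assoc, hH.toIncidence_mul_red]
        exact mul_neg_one A

lemma chowIncrement_apply (hμ : IsMobius μ) (hρ : ∀ s, ρ s s = 0) (hH : IsChow (chi ρ μ) H)
    {s t : β} (hst : s ≤ t) :
    chowIncrement A H s t =
      A s t + ∑ v ∈ Ico s t, chowIncrement A H s v * (qInt (ρ v t) - 1) := by
  have hsum : ∑ v ∈ Icc s t, chowIncrement A H s v * (qInt (ρ v t) - 1) = -A s t := by
    rw [← IncidenceAlgebra.neg_apply, ← chowIncrement_mul_qInt_sub_one A hμ hρ hH, mul_apply]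
    exact sum_congr rfl fun v hv => by rw [toIncidence_of_le _ (mem_Icc.mp hv).2]
  rw [← sum_Ico_add_eq_sum_Icc hst, hρ, qInt_zero] at hsum
  linear_combination -hsum

lemma mul_toIncidence_apply (hμ : IsMobius μ) (hρ : ∀ s, ρ s s = 0) (hH : IsChow (chi ρ μ) H)
    {s t : β} (hst : s ≤ t) :
    (A * toIncidence H) s t = A s t + ∑ v ∈ Ico s t, chowIncrement A H s v * qInt (ρ v t) := by
  rw [← sum_chowIncrement, ← sum_Ico_add_eq_sum_Icc hst, chowIncrement_apply A hμ hρ hH hst,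
    add_left_comm, ← sum_add_distrib]
  exact congrArg _ (sum_congr rfl fun v _ => by ring)

lemma mul_toIncidence_bot_apply [OrderBot β] (hμ : IsMobius μ) (hρ : ∀ s, ρ s s = 0)
    (hH : IsChow (chi ρ μ) H) (s : β) :
    (A * toIncidence H) ⊥ s = A ⊥ ⊥ + ∑ t ∈ Icc ⊥ s with t ≠ ⊥, chowIncrement A H ⊥ t := by
  have hbot : chowIncrement A H ⊥ ⊥ = A ⊥ ⊥ := by
    simpa using chowIncrement_apply A hμ hρ hH (le_refl ⊥)
  rw [← sum_chowIncrement, ← hbot, filter_ne', add_sum_erase _ _ (left_mem_Icc.mpr bot_le)]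

end IncidenceAlgebra

lemma rdiff_self {β : Type*} (r : β → ℕ) (s : β) : rdiff r s s = 0 := Nat.sub_self _

lemma chowIncrement_one_apply_eq_zero {α : Type*} [PartialOrder α] [OrderBot α]
    [LocallyFiniteOrder α] {rk : α → ℕ} (hmono : StrictMono rk) {μ : α → α → ℤ} (hμ : IsMobius μ)
    {H : α → α → ℤ[X]} (hH : IsChow (chi (rdiff rk) μ) H) {t : α} (ht : t ≠ ⊥) (hrk : rk t ≤ 1) :
    chowIncrement 1 H ⊥ t = 0 := by
  rw [chowIncrement_apply 1 hμ (rdiff_self _) hH bot_le, IncidenceAlgebra.one_apply,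
    if_neg ht.symm, zero_add]
  refine sum_eq_zero fun v hv => ?_
  have hρ : rdiff rk v t = 1 := by
    have := hmono (mem_Ico.mp hv).2
    unfold rdiff
    omega
  rw [hρ, qInt_one, sub_self, mul_zero]

section Truncation

variable {α : Type*} [PartialOrder α] {rk : α → ℕ} {t : α}

lemma trk_of_ne {w : Tr rk t} (hw : (w : α) ≠ t) : trk rk t w = rk w := if_neg hw

lemma trk_top (ht : rk t ≠ rk t - 1) : trk rk t ⟨t, le_rfl, ht⟩ = rk t - 1 := if_pos rfl

section OrderBot

variable [OrderBot α] {b : Tr rk t}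

lemma coe_eq_bot_of_isBot (hbot : rk ⊥ = 0) (ht : 1 < rk t) (hb : IsBot b) : (b : α) = ⊥ :=
  le_bot_iff.mp (hb ⟨⊥, bot_le, by omega⟩)

lemma trk_of_isBot (hmono : StrictMono rk) (hbot : rk ⊥ = 0) (hb : IsBot b) :
    trk rk t b = 0 := by
  rcases lt_or_ge 1 (rk t) with ht | ht
  · have hb' := coe_eq_bot_of_isBot hbot ht hb
    have hne : (b : α) ≠ t := by
      intro h
      rw [← h, hb', hbot] at ht
      omega
    rw [trk_of_ne hne, hb', hbot]
  · -- In this case the truncation is the single point `t`.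
    rcases b.2.1.eq_or_lt with h | h
    · rw [trk, if_pos h]
      omega
    · have := hmono h
      have := b.2.2
      omega

variable [Fintype α] [LocallyFiniteOrder α]

lemma sum_Ico_truncation {M : Type*} [AddCommMonoid M] (hb : IsBot b) (w : Tr rk t) (f : α → M) :
    ∑ v ∈ Ico b w, f v = ∑ v ∈ Ico ⊥ (w : α) with rk v ≠ rk t - 1, f v := by
  refine sum_nbij Subtype.val (fun v hv => ?_) Subtype.val_injective.injOn (fun v hv => ?_)
    fun _ _ => rfl
  · exact mem_filter.mpr ⟨mem_Ico.mpr ⟨bot_le, (mem_Ico.mp hv).2⟩, v.2.2⟩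
  · obtain ⟨hv, hrk⟩ := mem_filter.mp hv
    have hvw : v < w := (mem_Ico.mp hv).2
    exact ⟨⟨v, hvw.le.trans w.2.1, hrk⟩, mem_coe.mpr (mem_Ico.mpr ⟨hb _, hvw⟩), rfl⟩

lemma sum_Ico_truncation_of_lt {M : Type*} [AddCommMonoid M] (hmono : StrictMono rk)
    (hb : IsBot b) {w : Tr rk t} (hw : (w : α) < t) (f : α → M) :
    ∑ v ∈ Ico b w, f v = ∑ v ∈ Ico ⊥ (w : α), f v := by
  rw [sum_Ico_truncation hb, filter_true_of_mem]
  intro v hv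
  have := hmono (mem_Ico.mp hv).2
  have := hmono hw
  omega

section Increment

variable {μ : α → α → ℤ} {H : α → α → ℤ[X]}
  {μ' : Tr rk t → Tr rk t → ℤ} {H' : Tr rk t → Tr rk t → ℤ[X]}
  {A : IncidenceAlgebra ℤ[X] α} {A' : IncidenceAlgebra ℤ[X] (Tr rk t)}

lemma chowIncrement_truncation_of_lt (hmono : StrictMono rk)
    (hμ : IsMobius μ) (hH : IsChow (chi (rdiff rk) μ) H)
    (hμ' : IsMobius μ') (hH' : IsChow (chi (rdiff (trk rk t)) μ') H') (hb : IsBot b)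
    (hA : ∀ w : Tr rk t, (w : α) < t → A' b w = A ⊥ w) (w : Tr rk t) (hw : (w : α) < t) :
    chowIncrement A' H' b w = chowIncrement A H ⊥ w := by
  induction w using WellFoundedLT.induction with
  | ind w ih =>
    rw [chowIncrement_apply A' hμ' (rdiff_self _) hH' (hb w),
      chowIncrement_apply A hμ (rdiff_self _) hH bot_le, hA w hw,
      ← sum_Ico_truncation_of_lt hmono hb hw
        fun v => chowIncrement A H ⊥ v * (qInt (rdiff rk v w) - 1)]
    refine congrArg _ (sum_congr rfl fun v hv => ?_)
    have hvw : v < w := (mem_Ico.mp hv).2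
    have hvt : (v : α) < t := lt_trans hvw hw
    rw [ih v hvw hvt, rdiff, trk_of_ne hw.ne, trk_of_ne hvt.ne, rdiff]

lemma X_mul_mul_toIncidence_truncation (hmono : StrictMono rk)
    (hμ : IsMobius μ) (hH : IsChow (chi (rdiff rk) μ) H)
    (hμ' : IsMobius μ') (hH' : IsChow (chi (rdiff (trk rk t)) μ') H') (hb : IsBot b)
    (hA : ∀ w : Tr rk t, (w : α) < t → A' b w = A ⊥ w) (ht : rk t ≠ rk t - 1)
    (hAt : X * A' b ⟨t, le_rfl, ht⟩ = A ⊥ t) :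
    X * (A' * toIncidence H') b ⟨t, le_rfl, ht⟩ = chowIncrement A H ⊥ t := by
  have hq {v : α} (hv : v < t) : X * qInt (rk t - 1 - rk v) = qInt (rdiff rk v t) - 1 := by
    have hrk : rdiff rk v t = rk t - 1 - rk v + 1 := by
      have := hmono hv
      unfold rdiff
      omega
    rw [hrk, qInt_succ, add_sub_cancel_right]
  have hsum : X * ∑ v ∈ Ico b ⟨t, le_rfl, ht⟩,
        chowIncrement A' H' b v * qInt (rdiff (trk rk t) v ⟨t, le_rfl, ht⟩) =
      ∑ v ∈ Ico b ⟨t, le_rfl, ht⟩, chowIncrement A H ⊥ v * (qInt (rdiff rk v t) - 1) := by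
    rw [mul_sum]
    refine sum_congr rfl fun v hv => ?_
    have hvt : (v : α) < t := (mem_Ico.mp hv).2
    rw [chowIncrement_truncation_of_lt hmono hμ hH hμ' hH' hb hA v hvt, rdiff, trk_top ht,
      trk_of_ne hvt.ne, mul_left_comm, hq hvt]
  rw [mul_toIncidence_apply A' hμ' (rdiff_self _) hH' (hb _), mul_add, hAt, hsum,
    sum_Ico_truncation hb _ fun v => chowIncrement A H ⊥ v * (qInt (rdiff rk v t) - 1),
    chowIncrement_apply A hμ (rdiff_self _) hH bot_le]
  refine congrArg _ (sum_filter_of_ne fun v hv => ?_)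
  -- At a coatom `v` the coefficient `[ρ_{vt}] - 1 = [1] - 1` vanishes.
  contrapose!
  intro hrk
  rw [← hq (mem_Ico.mp hv).2, hrk, Nat.sub_self, qInt_zero, mul_zero, mul_zero]

lemma X_mul_chow_truncation (hmono : StrictMono rk) (hbot : rk ⊥ = 0)
    (hμ : IsMobius μ) (hH : IsChow (chi (rdiff rk) μ) H)
    (hμ' : IsMobius μ') (hH' : IsChow (chi (rdiff (trk rk t)) μ') H') (hb : IsBot b)
    (ht : 1 < rk t) :
    X * H' b ⟨t, le_rfl, by omega⟩ = chowIncrement 1 H ⊥ t := by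
  have hb' := coe_eq_bot_of_isBot hbot ht hb
  have hne : ⊥ ≠ t := by
    rintro rfl
    omega
  rw [← toIncidence_of_le H' (hb _), ← one_mul (toIncidence H')]
  refine X_mul_mul_toIncidence_truncation hmono hμ hH hμ' hH' hb (fun w _ => ?_) (by omega) ?_
  · simp [Subtype.ext_iff, hb']
  · simp [Subtype.ext_iff, hb', hne]

lemma X_mul_zrevConv_truncation (hmono : StrictMono rk) (hbot : rk ⊥ = 0)
    (hμ : IsMobius μ) (hH : IsChow (chi (rdiff rk) μ) H)
    (hμ' : IsMobius μ') (hH' : IsChow (chi (rdiff (trk rk t)) μ') H') (hb : IsBot b)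
    (ht : rk t ≠ rk t - 1) :
    X * zrevConv (rdiff (trk rk t)) H' b ⟨t, le_rfl, ht⟩ =
      chowIncrement (toIncidence fun s w => X ^ rdiff rk s w) H ⊥ t := by
  have hb' := trk_of_isBot hmono hbot hb
  rw [← toIncidence_of_le (zrevConv _ H') (hb _), toIncidence_zrevConv]
  refine X_mul_mul_toIncidence_truncation hmono hμ hH hμ' hH' hb (fun w hw => ?_) ht ?_
  · rw [toIncidence_of_le _ (hb w), toIncidence_of_le _ bot_le, rdiff, rdiff, hb', hbot,
      trk_of_ne hw.ne]
  · rw [toIncidence_of_le _ (hb _), toIncidence_of_le _ bot_le, rdiff, rdiff, hb', hbot,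
      trk_top ht, ← pow_succ', Nat.sub_zero, Nat.sub_zero, Nat.sub_add_cancel (by omega)]

end Increment

end OrderBot

end Truncation

end

-- When `rk` increases by more than one along some covers, the elements removed in `Tr rk t` are
-- those of corank one, not all the coatoms of `[0̂,t]`.
theorem larson_recursions_general {α : Type*}
    [PartialOrder α] [OrderBot α] [Fintype α] [LocallyFiniteOrder α]
    (rk : α → ℕ) (hmono : StrictMono rk) (hbot : rk ⊥ = 0)
    (mu : α → α → ℤ) (hmu : IsMobius mu)
    (H : α → α → Polynomial ℤ) (hH : IsChow (chi (rdiff rk) mu) H)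
    (HT GT : α → Polynomial ℤ)
    (hHT : ∀ (t : α) (ht : 1 < rk t),
      ∃ (mu' : Tr rk t → Tr rk t → ℤ) (H' : Tr rk t → Tr rk t → Polynomial ℤ) (b : Tr rk t),
        IsBot b ∧ IsMobius mu' ∧ IsChow (chi (rdiff (trk rk t)) mu') H' ∧
        HT t = H' b ⟨t, le_rfl, by omega⟩)
    (hGT : ∀ (t : α) (ht : t ≠ ⊥),
      ∃ (mu' : Tr rk t → Tr rk t → ℤ) (H' : Tr rk t → Tr rk t → Polynomial ℤ) (b : Tr rk t),
        IsBot b ∧ IsMobius mu' ∧ IsChow (chi (rdiff (trk rk t)) mu') H' ∧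
        GT t = zrevConv (rdiff (trk rk t)) H' b
          ⟨t, le_rfl, by have := hmono (bot_lt_iff_ne_bot.mpr ht); omega⟩)
    (s : α) :
    H ⊥ s = 1 + X * ∑ t ∈ Icc ⊥ s with 1 < rk t, HT t ∧
    zrevConv (rdiff rk) H ⊥ s = 1 + X * ∑ t ∈ Icc ⊥ s with t ≠ ⊥, GT t := by
  constructor
  · have hsub : {t ∈ Icc ⊥ s | 1 < rk t} ⊆ {t ∈ Icc ⊥ s | t ≠ ⊥} :=
      monotone_filter_right _ fun t _ ht => by rintro rfl; omega
    rw [← toIncidence_of_le H bot_le, ← one_mul (toIncidence H),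
      mul_toIncidence_bot_apply 1 hmu (rdiff_self rk) hH, IncidenceAlgebra.one_apply, if_pos rfl,
      mul_sum, ← sum_subset hsub]
    · refine congrArg _ (sum_congr rfl fun t ht => ?_)
      obtain ⟨mu', H', b, hb, hmu', hH', hHt⟩ := hHT t (mem_filter.mp ht).2
      rw [hHt]
      exact (X_mul_chow_truncation hmono hbot hmu hH hmu' hH' hb (mem_filter.mp ht).2).symm
    · intro t ht hrk
      obtain ⟨hts, htbot⟩ := mem_filter.mp ht
      exact chowIncrement_one_apply_eq_zero hmono hmu hH htbot
        (not_lt.mp fun h => hrk (mem_filter.mpr ⟨hts, h⟩))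
  · rw [← toIncidence_of_le (zrevConv _ H) bot_le, toIncidence_zrevConv,
      mul_toIncidence_bot_apply _ hmu (rdiff_self rk) hH, toIncidence_of_le _ le_rfl, rdiff_self,
      pow_zero, mul_sum]
    refine congrArg _ (sum_congr rfl fun t ht => ?_)
    have htbot := (mem_filter.mp ht).2
    have hrk := hmono (bot_lt_iff_ne_bot.mpr htbot)
    obtain ⟨mu', H', b, hb, hmu', hH', hGt⟩ := hGT t htbot
    rw [hGt]
    exact (X_mul_zrevConv_truncation hmono hbot hmu hH hmu' hH' hb (by omega)).symm

/-- Proposition 4.9 (Larson's recursions): for a finite graded bounded poset `P`,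
`ℋ_P(x) = 1 + x Σ_{t : ρ(t) > 1} ℋ_{trunc([0̂,t])}(x)` and
`G_P(x) = 1 + x Σ_{t ≠ 0̂} G_{trunc([0̂,t])}(x)`.  Here `HT t` (resp. `GT t`) is the `χ`-Chow
(resp. left `χ`-augmented Chow) polynomial of the truncation `trunc([0̂,t])`, characterized by
the existence of the Möbius function and Chow function of that truncated poset. -/
theorem larson_recursions {α : Type*}
    [PartialOrder α] [BoundedOrder α] [Fintype α] [LocallyFiniteOrder α]
    (rk : α → ℕ) (hg : GradedData rk)
    (mu : α → α → ℤ) (hmu : IsMobius mu)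
    (H : α → α → Polynomial ℤ) (hH : IsChow (chi (rdiff rk) mu) H)
    (HT GT : α → Polynomial ℤ)
    (hHT : ∀ (t : α) (ht : 1 < rk t),
      ∃ (mu' : Tr rk t → Tr rk t → ℤ) (H' : Tr rk t → Tr rk t → Polynomial ℤ) (b : Tr rk t),
        IsBot b ∧ IsMobius mu' ∧ IsChow (chi (rdiff (trk rk t)) mu') H' ∧
        HT t = H' b ⟨t, le_refl t, by omega⟩)
    (hGT : ∀ (t : α) (ht : t ≠ ⊥),
      ∃ (mu' : Tr rk t → Tr rk t → ℤ) (H' : Tr rk t → Tr rk t → Polynomial ℤ) (b : Tr rk t),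
        IsBot b ∧ IsMobius mu' ∧ IsChow (chi (rdiff (trk rk t)) mu') H' ∧
        GT t = zrevConv (rdiff (trk rk t)) H' b ⟨t, le_refl t, by
          have h1 := hg.mono (bot_lt_iff_ne_bot.mpr ht)
          have h2 := hg.bot
          omega⟩) :
    H ⊥ ⊤ = 1 + X * ∑ t ∈ Finset.univ.filter (fun t : α => 1 < rk t), HT t ∧
    zrevConv (rdiff rk) H ⊥ ⊤
      = 1 + X * ∑ t ∈ Finset.univ.filter (fun t : α => t ≠ ⊥), GT t := by
  simpa only [Icc_bot_top] using
    larson_recursions_general rk hg.mono hg.bot mu hmu H hH HT GT hHT hGT ⊤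
end
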